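/- Robust positive invariance of the feasible set (Theorem 1): for every performance level γ ≥ γ_f, every x ∈ X_T^γ, every admissible pair (Φx, Φu) ∈ Π_T^γ(x) with first control action u₀ = Φu^{[0,0]} x (the top-left m×n block of Φu applied to x), and every disturbance w ∈ 𝒲, the successor state satisfies Ax + Bu₀ + w ∈ X_T^γ; in particular, X_T^γ is robust positively invariant under the receding horizon control law that applies the first action of any policy in Π_T^γ(x). -/

import Mathlib

open Matrix

noncomputable section

/-- Index type for stacked state / disturbance trajectories over horizon `T`:
block index in `Fin (T+1)`, coordinate in `Fin n`. -/
abbrev SIdx (n T : ℕ) := Fin (T + 1) × Fin n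

/-- Index type for stacked input trajectories over horizon `T`. -/
abbrev UIdx (m T : ℕ) := Fin T × Fin m

/-- The block-downshift operator `𝐙`. -/
def Zshift (n T : ℕ) : Matrix (SIdx n T) (SIdx n T) ℝ :=
  Matrix.of fun p q => if (p.1 : ℕ) = (q.1 : ℕ) + 1 ∧ p.2 = q.2 then (1 : ℝ) else 0

/-- `𝐀 = I_{T+1} ⊗ A`. -/
def bigA (n T : ℕ) (A : Matrix (Fin n) (Fin n) ℝ) : Matrix (SIdx n T) (SIdx n T) ℝ :=
  Matrix.of fun p q => if p.1 = q.1 then A p.2 q.2 else 0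

/-- `𝐁 = col(I_T ⊗ B, 0)`. -/
def bigB (n m T : ℕ) (B : Matrix (Fin n) (Fin m) ℝ) : Matrix (SIdx n T) (UIdx m T) ℝ :=
  Matrix.of fun p q => if (p.1 : ℕ) = (q.1 : ℕ) then B p.2 q.2 else 0

/-- `𝐐 = blkdiag(I_T ⊗ Q, 0)`. -/
def bigQ (n T : ℕ) (Q : Matrix (Fin n) (Fin n) ℝ) : Matrix (SIdx n T) (SIdx n T) ℝ :=
  Matrix.of fun p q => if p.1 = q.1 ∧ (p.1 : ℕ) < T then Q p.2 q.2 else 0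

/-- `𝐑 = I_T ⊗ R`. -/
def bigR (m T : ℕ) (R : Matrix (Fin m) (Fin m) ℝ) : Matrix (UIdx m T) (UIdx m T) ℝ :=
  Matrix.of fun p q => if p.1 = q.1 then R p.2 q.2 else 0

/-- `𝐅 = (I − 𝐙𝐀)⁻¹𝐙𝐁`. -/
def bigF (n m T : ℕ) (A : Matrix (Fin n) (Fin n) ℝ) (B : Matrix (Fin n) (Fin m) ℝ) :
    Matrix (SIdx n T) (UIdx m T) ℝ :=
  (1 - Zshift n T * bigA n T A)⁻¹ * (Zshift n T * bigB n m T B)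

/-- `𝐆 = (I − 𝐙𝐀)⁻¹`. -/
def bigG (n T : ℕ) (A : Matrix (Fin n) (Fin n) ℝ) : Matrix (SIdx n T) (SIdx n T) ℝ :=
  (1 - Zshift n T * bigA n T A)⁻¹

/-- The control cost `J_T(u, δ) = xᵀ𝐐x + uᵀ𝐑u` with `x = 𝐅u + 𝐆δ`. -/
def costJ (n m T : ℕ) (A : Matrix (Fin n) (Fin n) ℝ) (B : Matrix (Fin n) (Fin m) ℝ)
    (Q : Matrix (Fin n) (Fin n) ℝ) (R : Matrix (Fin m) (Fin m) ℝ)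
    (u : UIdx m T → ℝ) (δ : SIdx n T → ℝ) : ℝ :=
  let x := bigF n m T A B *ᵥ u + bigG n T A *ᵥ δ
  x ⬝ᵥ (bigQ n T Q *ᵥ x) + u ⬝ᵥ (bigR m T R *ᵥ u)

/-- `𝐏 = 𝐑 + 𝐅ᵀ𝐐𝐅`. -/
def bigP (n m T : ℕ) (A : Matrix (Fin n) (Fin n) ℝ) (B : Matrix (Fin n) (Fin m) ℝ)
    (Q : Matrix (Fin n) (Fin n) ℝ) (R : Matrix (Fin m) (Fin m) ℝ) :
    Matrix (UIdx m T) (UIdx m T) ℝ :=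
  bigR m T R + (bigF n m T A B)ᵀ * bigQ n T Q * bigF n m T A B

/-- The clairvoyant cost matrix `𝐂_T = 𝐆ᵀ𝐐(I + 𝐅𝐑⁻¹𝐅ᵀ𝐐)⁻¹𝐆`. -/
def Cmat (n m T : ℕ) (A : Matrix (Fin n) (Fin n) ℝ) (B : Matrix (Fin n) (Fin m) ℝ)
    (Q : Matrix (Fin n) (Fin n) ℝ) (R : Matrix (Fin m) (Fin m) ℝ) :
    Matrix (SIdx n T) (SIdx n T) ℝ :=
  (bigG n T A)ᵀ * bigQ n T Q *
    (1 + bigF n m T A B * (bigR m T R)⁻¹ * (bigF n m T A B)ᵀ * bigQ n T Q)⁻¹ * bigG n T A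

/-- Assemble `δ = col(x₀, w₀, …, w_{T−1})`. -/
def assemble (n T : ℕ) (x0 : Fin n → ℝ) (w : Fin T × Fin n → ℝ) : SIdx n T → ℝ :=
  fun p => if h : (p.1 : ℕ) = 0 then x0 p.2
    else w (⟨(p.1 : ℕ) - 1, by have := p.1.isLt; omega⟩, p.2)

/-- `𝐐̄ = blkdiag(I_T ⊗ Q, P)`. -/
def bigQbar (n T : ℕ) (Q P : Matrix (Fin n) (Fin n) ℝ) : Matrix (SIdx n T) (SIdx n T) ℝ :=
  Matrix.of fun p q =>
    if p.1 = q.1 then (if (p.1 : ℕ) < T then Q p.2 q.2 else P p.2 q.2) else 0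

/-- `𝐒̄ = blkdiag(𝐐̄, 𝐑)`. -/
def bigS (n m T : ℕ) (Q P : Matrix (Fin n) (Fin n) ℝ) (R : Matrix (Fin m) (Fin m) ℝ) :
    Matrix (SIdx n T ⊕ UIdx m T) (SIdx n T ⊕ UIdx m T) ℝ :=
  Matrix.fromBlocks (bigQbar n T Q P) 0 0 (bigR m T R)

/-- The regret `Reg_T(Φx, Φu, γ, δ)` for `δ = col(x₀, w)`:
`col(Φxδ, Φuδ)ᵀ𝐒̄ col(Φxδ, Φuδ) − δᵀ𝐂_Tδ − γ²wᵀw`. -/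
def RegT (n m T : ℕ) (A : Matrix (Fin n) (Fin n) ℝ) (B : Matrix (Fin n) (Fin m) ℝ)
    (Q : Matrix (Fin n) (Fin n) ℝ) (R : Matrix (Fin m) (Fin m) ℝ)
    (P : Matrix (Fin n) (Fin n) ℝ) (γ : ℝ)
    (Φx : Matrix (SIdx n T) (SIdx n T) ℝ) (Φu : Matrix (UIdx m T) (SIdx n T) ℝ)
    (x0 : Fin n → ℝ) (w : Fin T × Fin n → ℝ) : ℝ :=
  let δ := assemble n T x0 w
  let z : SIdx n T ⊕ UIdx m T → ℝ := Sum.elim (Φx *ᵥ δ) (Φu *ᵥ δ)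
  z ⬝ᵥ (bigS n m T Q P R *ᵥ z) - δ ⬝ᵥ (Cmat n m T A B Q R *ᵥ δ) - γ ^ 2 * (w ⬝ᵥ w)
/-- A pair of closed-loop responses is causal if both matrices are block lower
triangular (all blocks strictly above the block diagonal vanish). -/
def causalPair (n m T : ℕ) (Φx : Matrix (SIdx n T) (SIdx n T) ℝ)
    (Φu : Matrix (UIdx m T) (SIdx n T) ℝ) : Prop :=
  (∀ p q : SIdx n T, (p.1 : ℕ) < (q.1 : ℕ) → Φx p q = 0) ∧
  (∀ (p : UIdx m T) (q : SIdx n T), (p.1 : ℕ) < (q.1 : ℕ) → Φu p q = 0)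

/-- Achievability: `(I − 𝐙𝐀)Φx − 𝐙𝐁Φu = I`. -/
def achievablePair (n m T : ℕ) (A : Matrix (Fin n) (Fin n) ℝ) (B : Matrix (Fin n) (Fin m) ℝ)
    (Φx : Matrix (SIdx n T) (SIdx n T) ℝ) (Φu : Matrix (UIdx m T) (SIdx n T) ℝ) : Prop :=
  (1 - Zshift n T * bigA n T A) * Φx - Zshift n T * bigB n m T B * Φu = 1

/-- Safety: for every disturbance sequence with components in `𝒲`, the closed-loop state
and input trajectories satisfy `(x_t, u_t) ∈ 𝒵` for `t = 0, …, T−1` and `x_T ∈ 𝒵_f`. -/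
def safePair (n m T : ℕ) (W : Set (Fin n → ℝ))
    (Zc : Set ((Fin n → ℝ) × (Fin m → ℝ))) (Zf : Set (Fin n → ℝ))
    (x0 : Fin n → ℝ) (Φx : Matrix (SIdx n T) (SIdx n T) ℝ)
    (Φu : Matrix (UIdx m T) (SIdx n T) ℝ) : Prop :=
  ∀ w : Fin T × Fin n → ℝ, (∀ t : Fin T, (fun p => w (t, p)) ∈ W) →
    (∀ t : Fin T,
      ((fun p => (Φx *ᵥ assemble n T x0 w) (t.castSucc, p)),
        (fun q => (Φu *ᵥ assemble n T x0 w) (t, q))) ∈ Zc) ∧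
    (fun p => (Φx *ᵥ assemble n T x0 w) (Fin.last T, p)) ∈ Zf

/-- `Φ_w`: the last `Tn` columns of `col(Φx, Φu)`. -/
def stackW (n m T : ℕ) (Φx : Matrix (SIdx n T) (SIdx n T) ℝ)
    (Φu : Matrix (UIdx m T) (SIdx n T) ℝ) :
    Matrix (SIdx n T ⊕ UIdx m T) (Fin T × Fin n) ℝ :=
  Matrix.of fun r c =>
    Sum.elim (fun p => Φx p (c.1.succ, c.2)) (fun q => Φu q (c.1.succ, c.2)) r

/-- The linear matrix inequality `γ²I + 𝐂_T^{[1:T,1:T]} − Φ_wᵀ𝐒̄Φ_w ⪰ 0`. -/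
def lmiOK (n m T : ℕ) (A : Matrix (Fin n) (Fin n) ℝ) (B : Matrix (Fin n) (Fin m) ℝ)
    (Q : Matrix (Fin n) (Fin n) ℝ) (R : Matrix (Fin m) (Fin m) ℝ)
    (P : Matrix (Fin n) (Fin n) ℝ) (γ : ℝ)
    (Φx : Matrix (SIdx n T) (SIdx n T) ℝ) (Φu : Matrix (UIdx m T) (SIdx n T) ℝ) : Prop :=
  (γ ^ 2 • (1 : Matrix (Fin T × Fin n) (Fin T × Fin n) ℝ) +
    (Cmat n m T A B Q R).submatrix
      (fun c : Fin T × Fin n => ((c.1.succ : Fin (T + 1)), c.2))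
      (fun c : Fin T × Fin n => ((c.1.succ : Fin (T + 1)), c.2)) -
    (stackW n m T Φx Φu)ᵀ * bigS n m T Q P R * stackW n m T Φx Φu).PosSemidef

/-- Membership in `Π_T^γ(x₀)`: causal, achievable, safe, and satisfying the LMI. -/
def memPi (n m T : ℕ) (A : Matrix (Fin n) (Fin n) ℝ) (B : Matrix (Fin n) (Fin m) ℝ)
    (Q : Matrix (Fin n) (Fin n) ℝ) (R : Matrix (Fin m) (Fin m) ℝ)
    (P : Matrix (Fin n) (Fin n) ℝ) (W : Set (Fin n → ℝ))
    (Zc : Set ((Fin n → ℝ) × (Fin m → ℝ))) (Zf : Set (Fin n → ℝ))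
    (γ : ℝ) (x0 : Fin n → ℝ)
    (Φx : Matrix (SIdx n T) (SIdx n T) ℝ) (Φu : Matrix (UIdx m T) (SIdx n T) ℝ) : Prop :=
  causalPair n m T Φx Φu ∧ achievablePair n m T A B Φx Φu ∧
    safePair n m T W Zc Zf x0 Φx Φu ∧ lmiOK n m T A B Q R P γ Φx Φu

/-- The feasible set `X_T^γ = {x : Π_T^γ(x) ≠ ∅}`. -/
def Xset (n m T : ℕ) (A : Matrix (Fin n) (Fin n) ℝ) (B : Matrix (Fin n) (Fin m) ℝ)
    (Q : Matrix (Fin n) (Fin n) ℝ) (R : Matrix (Fin m) (Fin m) ℝ)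
    (P : Matrix (Fin n) (Fin n) ℝ) (W : Set (Fin n → ℝ))
    (Zc : Set ((Fin n → ℝ) × (Fin m → ℝ))) (Zf : Set (Fin n → ℝ))
    (γ : ℝ) : Set (Fin n → ℝ) :=
  {x | ∃ Φx Φu, memPi n m T A B Q R P W Zc Zf γ x Φx Φu}

/-!
Condition (ii) of `Π_T^γ` is a statement about costs: `δᵀ 𝐂_T δ` is the value of a least-squares
problem, namely the optimal running cost of a controller that knows `δ = (x₀, w)` in advance, so
(ii) bounds the regret from `x₀ = 0` by `γ² ‖w‖²`.

Given an admissible policy at `x` with nominal successor `y = Ax + Bu₀`, a policy at `z = y + w` is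
obtained by shifting time by one step and appending the feedback `K_f`. A policy is linear in the
initial state, so the past has to be reconstructed linearly as well: choose a functional `l` with
`l z = 1` and pretend that an initial state `z'` came from `l(z') x` through the disturbance
`z' - l(z') y`. For `z' = z` this is the past that really happened, which gives safety; for `z' = 0`
it is the zero past, which gives the regret bound: the clairvoyant cost does not grow when a zero
step is prepended and the last step dropped, and the appended step is paid for by the dissipation
inequality `q(x) + r(K_f x) + p(Ax + BK_f x + w) ≤ p(x) + γ² ‖w‖²`, which completing the square
extracts from the Riccati equation. No functional `l` exists if `z = 0`, but there the feedback
`K_f` alone is an admissible policy.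
-/

/-! ### Robust linear-quadratic control -/

/-- Data of a robust linear-quadratic control problem: dynamics `x⁺ = A x + B u + w`, stage cost
`stateCost x + inputCost u`, terminal cost, a price `supply w` that the regret may cost per unit of
disturbance, the set of disturbances, the constraint set for state-input pairs and the terminal
set. -/
structure RobustLQ (E F : Type*) [AddCommGroup E] [Module ℝ E] [AddCommGroup F] [Module ℝ F] where
  A : E →ₗ[ℝ] E
  B : F →ₗ[ℝ] E
  stateCost : QuadraticForm ℝ E
  inputCost : QuadraticForm ℝ F
  terminalCost : QuadraticForm ℝ E
  supply : QuadraticForm ℝ E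
  disturbances : Set E
  constraints : Set (E × F)
  terminalSet : Set E

namespace RobustLQ

variable {E F : Type*} [AddCommGroup E] [Module ℝ E] [AddCommGroup F] [Module ℝ F] {T : ℕ}
  (S : RobustLQ E F)

/-- `x` and `u` form the trajectory driven by `δ = (x₀, w₀, …, w_{T-1})`. As in the stacked
notation, the initial state is the first entry of the disturbance, so `w_t` is `δ t.succ`. -/
def IsTrajectory (δ x : Fin (T + 1) → E) (u : Fin T → F) : Prop :=
  x 0 = δ 0 ∧ ∀ t : Fin T, x t.succ = S.A (x t.castSucc) + S.B (u t) + δ t.succ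

/-- The cost accumulated over the horizon, without the terminal cost. -/
def runningCost (x : Fin (T + 1) → E) (u : Fin T → F) : ℝ :=
  ∑ t : Fin T, (S.stateCost (x t.castSucc) + S.inputCost (u t))

/-- The running costs of all trajectories driven by `δ`. -/
def attainableCosts (δ : Fin (T + 1) → E) : Set ℝ :=
  {c | ∃ x u, S.IsTrajectory δ x u ∧ S.runningCost x u = c}

/-- The optimal running cost of a controller that knows `δ` in advance. -/
def clairvoyantCost (δ : Fin (T + 1) → E) : ℝ :=
  sInf (S.attainableCosts δ)

/-- `X` and `U` are the closed-loop responses `δ ↦ x` and `δ ↦ u` of a causal linear policy.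
Causality of `X` is then automatic, see `IsResponse.state_eq_zero`. -/
structure IsResponse (X : (Fin (T + 1) → E) →ₗ[ℝ] (Fin (T + 1) → E))
    (U : (Fin (T + 1) → E) →ₗ[ℝ] (Fin T → F)) : Prop where
  isTrajectory : ∀ δ, S.IsTrajectory δ (X δ) (U δ)
  input_eq_zero : ∀ δ t, (∀ s ≤ t.castSucc, δ s = 0) → U δ t = 0

/-- Robust constraint satisfaction from the initial state `x₀`. -/
def IsSafe (x₀ : E) (X : (Fin (T + 1) → E) →ₗ[ℝ] (Fin (T + 1) → E))
    (U : (Fin (T + 1) → E) →ₗ[ℝ] (Fin T → F)) : Prop :=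
  ∀ w : Fin T → E, (∀ t, w t ∈ S.disturbances) →
    (∀ t : Fin T, (X (Fin.cons x₀ w) t.castSucc, U (Fin.cons x₀ w) t) ∈ S.constraints) ∧
      X (Fin.cons x₀ w) (Fin.last T) ∈ S.terminalSet

/-- The regret with respect to the clairvoyant controller, from the initial state `0`, is paid for
by the supply. -/
def HasRegretBound (X : (Fin (T + 1) → E) →ₗ[ℝ] (Fin (T + 1) → E))
    (U : (Fin (T + 1) → E) →ₗ[ℝ] (Fin T → F)) : Prop :=
  ∀ w : Fin T → E,
    S.runningCost (X (Fin.cons 0 w)) (U (Fin.cons 0 w)) +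
        S.terminalCost (X (Fin.cons 0 w) (Fin.last T)) ≤
      ∑ t, S.supply (w t) + S.clairvoyantCost (Fin.cons 0 w : Fin (T + 1) → E)

/-- The abstract counterpart of membership in `Π_T^γ(x₀)`. -/
structure IsAdmissible (x₀ : E) (X : (Fin (T + 1) → E) →ₗ[ℝ] (Fin (T + 1) → E))
    (U : (Fin (T + 1) → E) →ₗ[ℝ] (Fin T → F)) : Prop extends S.IsResponse X U where
  safe : S.IsSafe x₀ X U
  regret : S.HasRegretBound X U

/-- The abstract counterpart of `X_T^γ`. -/
def feasibleSet (T : ℕ) : Set E :=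
  {x₀ | ∃ (X : (Fin (T + 1) → E) →ₗ[ℝ] (Fin (T + 1) → E)) (U : _ →ₗ[ℝ] (Fin T → F)),
    S.IsAdmissible x₀ X U}

/-- The feedback `u = K x` keeps the terminal set admissible and robustly invariant, and makes the
terminal cost a storage function for the supply. -/
structure IsTerminalController (K : E →ₗ[ℝ] F) : Prop where
  dissipation : ∀ x w, S.stateCost x + S.inputCost (K x) +
    S.terminalCost (S.A x + S.B (K x) + w) ≤ S.terminalCost x + S.supply w
  mem_constraints : ∀ x ∈ S.terminalSet, (x, K x) ∈ S.constraints
  mem_terminalSet : ∀ x ∈ S.terminalSet, ∀ w ∈ S.disturbances,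
    S.A x + S.B (K x) + w ∈ S.terminalSet

variable {S}

section Trajectories

lemma IsTrajectory.state_eq_zero {δ x : Fin (T + 1) → E} {u : Fin T → F}
    (h : S.IsTrajectory δ x u) (t : Fin (T + 1)) (hδ : ∀ s ≤ t, δ s = 0)
    (hu : ∀ s : Fin T, s.castSucc < t → u s = 0) : x t = 0 := by
  induction t using Fin.induction with
  | zero => rw [h.1, hδ 0 le_rfl]
  | succ t ih =>
    have hx : x t.castSucc = 0 :=
      ih (fun s hs => hδ s (hs.trans t.castSucc_lt_succ.le))
        fun s hs => hu s (hs.trans t.castSucc_lt_succ)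
    rw [h.2, hx, hu t t.castSucc_lt_succ, hδ _ le_rfl]
    simp

lemma IsTrajectory.snoc_tail {δ x : Fin (T + 2) → E} {u : Fin (T + 1) → F}
    (h : S.IsTrajectory δ x u) (v : F) (w : E) :
    S.IsTrajectory (Fin.cons (x 1) (Fin.snoc (Fin.tail (Fin.tail δ)) w : Fin (T + 1) → E))
      (Fin.snoc (Fin.tail x) (S.A (x (Fin.last _)) + S.B v + w)) (Fin.snoc (Fin.tail u) v) := by
  refine ⟨?_, fun t => ?_⟩
  · rw [← Fin.castSucc_zero, Fin.snoc_castSucc]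
    rfl
  · induction t using Fin.lastCases with
    | last => simp [Fin.tail]
    | cast t =>
      rw [Fin.cons_succ, Fin.succ_castSucc]
      simp only [Fin.snoc_castSucc]
      exact h.2 t.succ

lemma IsTrajectory.cons_zero_init {δ x : Fin (T + 2) → E} {u : Fin (T + 1) → F}
    (h : S.IsTrajectory δ x u) :
    S.IsTrajectory (Fin.cons 0 (Fin.init δ) : Fin (T + 2) → E) (Fin.cons 0 (Fin.init x))
      (Fin.cons 0 (Fin.init u)) := by
  refine ⟨rfl, fun t => ?_⟩
  induction t using Fin.cases with
  | zero => simp [Fin.init, h.1]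
  | succ t => simpa [Fin.init, ← Fin.succ_castSucc] using h.2 t.castSucc

lemma IsResponse.state_eq_zero {X : (Fin (T + 1) → E) →ₗ[ℝ] (Fin (T + 1) → E)}
    {U : (Fin (T + 1) → E) →ₗ[ℝ] (Fin T → F)} (h : S.IsResponse X U) {δ : Fin (T + 1) → E}
    {t : Fin (T + 1)} (hδ : ∀ s ≤ t, δ s = 0) : X δ t = 0 :=
  (h.isTrajectory δ).state_eq_zero t hδ fun _ hs =>
    h.input_eq_zero δ _ fun r hr => hδ r (hr.trans hs.le)

lemma IsResponse.input_congr {X : (Fin (T + 1) → E) →ₗ[ℝ] (Fin (T + 1) → E)}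
    {U : (Fin (T + 1) → E) →ₗ[ℝ] (Fin T → F)} (h : S.IsResponse X U) {δ δ' : Fin (T + 1) → E}
    {t : Fin T} (hδ : ∀ s ≤ t.castSucc, δ s = δ' s) : U δ t = U δ' t := by
  have hsub : U (δ - δ') t = 0 := h.input_eq_zero _ t fun s hs => sub_eq_zero.2 (hδ s hs)
  rwa [map_sub, Pi.sub_apply, sub_eq_zero] at hsub

end Trajectories

section RunningCost

lemma runningCost_nonneg (hq : ∀ x, 0 ≤ S.stateCost x) (hr : ∀ u, 0 ≤ S.inputCost u)
    (x : Fin (T + 1) → E) (u : Fin T → F) : 0 ≤ S.runningCost x u :=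
  Finset.sum_nonneg fun _ _ => add_nonneg (hq _) (hr _)

lemma runningCost_snoc_tail (x : Fin (T + 2) → E) (u : Fin (T + 1) → F) (z : E) (v : F) :
    S.runningCost (Fin.snoc (Fin.tail x) z) (Fin.snoc (Fin.tail u) v) +
        (S.stateCost (x 0) + S.inputCost (u 0)) =
      S.runningCost x u + (S.stateCost (x (Fin.last _)) + S.inputCost v) := by
  rw [runningCost, runningCost, Fin.sum_univ_castSucc, Fin.sum_univ_succ]
  simp only [Fin.snoc_castSucc, Fin.snoc_last, Fin.tail, Fin.succ_castSucc, Fin.succ_last,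
    Fin.castSucc_zero]
  ring

lemma runningCost_cons_zero_init (x : Fin (T + 2) → E) (u : Fin (T + 1) → F) :
    S.runningCost (Fin.cons 0 (Fin.init x)) (Fin.cons 0 (Fin.init u)) +
        (S.stateCost (x (Fin.last T).castSucc) + S.inputCost (u (Fin.last T))) =
      S.runningCost x u := by
  rw [runningCost, runningCost, Fin.sum_univ_succ, Fin.sum_univ_castSucc]
  simp [Fin.init]

lemma runningCost_add_terminalCost_le {K : E →ₗ[ℝ] F} (hK : S.IsTerminalController K)
    {δ x : Fin (T + 1) → E} (h : S.IsTrajectory δ x fun t => K (x t.castSucc)) :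
    S.runningCost x (fun t => K (x t.castSucc)) + S.terminalCost (x (Fin.last T)) ≤
      S.terminalCost (x 0) + ∑ t : Fin T, S.supply (δ t.succ) := by
  have hstep (t : Fin T) : S.stateCost (x t.castSucc) + S.inputCost (K (x t.castSucc)) +
      S.terminalCost (x t.succ) ≤ S.terminalCost (x t.castSucc) + S.supply (δ t.succ) := by
    rw [h.2 t]
    exact hK.dissipation _ _
  have hsum := Finset.sum_le_sum fun t (_ : t ∈ Finset.univ) => hstep t
  have htelescope : ∑ t : Fin T, S.terminalCost (x t.castSucc) + S.terminalCost (x (Fin.last T)) =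
      S.terminalCost (x 0) + ∑ t : Fin T, S.terminalCost (x t.succ) := by
    rw [← Fin.sum_univ_castSucc fun t => S.terminalCost (x t), Fin.sum_univ_succ]
  simp only [Finset.sum_add_distrib] at hsum
  rw [runningCost, Finset.sum_add_distrib]
  linarith

lemma clairvoyantCost_nonneg (hq : ∀ x, 0 ≤ S.stateCost x) (hr : ∀ u, 0 ≤ S.inputCost u)
    (δ : Fin (T + 1) → E) : 0 ≤ S.clairvoyantCost δ :=
  Real.sInf_nonneg fun _ ⟨x, u, _, hc⟩ => hc ▸ runningCost_nonneg hq hr x u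

lemma clairvoyantCost_cons_zero_init_le (hq : ∀ x, 0 ≤ S.stateCost x)
    (hr : ∀ u, 0 ≤ S.inputCost u) {δ : Fin (T + 2) → E} (hδ : (S.attainableCosts δ).Nonempty) :
    S.clairvoyantCost (Fin.cons 0 (Fin.init δ) : Fin (T + 2) → E) ≤ S.clairvoyantCost δ := by
  refine le_csInf hδ ?_
  rintro _ ⟨x, u, h, rfl⟩
  have hbdd : BddBelow (S.attainableCosts (Fin.cons 0 (Fin.init δ) : Fin (T + 2) → E)) :=
    ⟨0, fun _ ⟨x, u, _, hc⟩ => hc ▸ runningCost_nonneg hq hr x u⟩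
  refine (csInf_le hbdd ⟨_, _, h.cons_zero_init, rfl⟩).trans ?_
  rw [← runningCost_cons_zero_init x u]
  exact le_add_of_nonneg_right (add_nonneg (hq _) (hr _))

end RunningCost

section TerminalPolicy

/-- The state response of the static feedback `u = K x`. -/
def terminalState (S : RobustLQ E F) (K : E →ₗ[ℝ] F) :
    (Fin (T + 1) → E) →ₗ[ℝ] (Fin (T + 1) → E) :=
  LinearMap.pi <| Fin.induction (LinearMap.proj 0) fun t x =>
    (S.A + S.B ∘ₗ K) ∘ₗ x + LinearMap.proj t.succ

/-- The input response of the static feedback `u = K x`. -/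
def terminalInput (S : RobustLQ E F) (K : E →ₗ[ℝ] F) :
    (Fin (T + 1) → E) →ₗ[ℝ] (Fin T → F) :=
  LinearMap.pi fun t => K ∘ₗ LinearMap.proj t.castSucc ∘ₗ S.terminalState K

lemma isTrajectory_terminal (K : E →ₗ[ℝ] F) (δ : Fin (T + 1) → E) :
    S.IsTrajectory δ (S.terminalState K δ) (S.terminalInput K δ) :=
  ⟨rfl, fun _ => rfl⟩

lemma terminalInput_apply (K : E →ₗ[ℝ] F) (δ : Fin (T + 1) → E) (t : Fin T) :
    S.terminalInput K δ t = K (S.terminalState K δ t.castSucc) :=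
  rfl

lemma terminalState_eq_zero (K : E →ₗ[ℝ] F) {δ : Fin (T + 1) → E} (t : Fin (T + 1))
    (hδ : ∀ s ≤ t, δ s = 0) : S.terminalState K δ t = 0 := by
  induction t using Fin.induction with
  | zero => exact hδ 0 le_rfl
  | succ t ih =>
    have hprev := ih fun s hs => hδ s (hs.trans t.castSucc_lt_succ.le)
    rw [(isTrajectory_terminal K δ).2 t, terminalInput_apply, hprev, hδ _ le_rfl]
    simp

lemma isResponse_terminal (K : E →ₗ[ℝ] F) :
    S.IsResponse (S.terminalState K) (S.terminalInput K : _ →ₗ[ℝ] (Fin T → F)) where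
  isTrajectory := isTrajectory_terminal K
  input_eq_zero δ t hδ := by rw [terminalInput_apply, terminalState_eq_zero K _ hδ, map_zero]

lemma IsTerminalController.terminalState_mem {K : E →ₗ[ℝ] F} (hK : S.IsTerminalController K)
    {δ : Fin (T + 1) → E} (h₀ : δ 0 ∈ S.terminalSet)
    (hw : ∀ t : Fin T, δ t.succ ∈ S.disturbances) (t : Fin (T + 1)) :
    S.terminalState K δ t ∈ S.terminalSet := by
  induction t using Fin.induction with
  | zero => exact h₀
  | succ t ih => exact hK.mem_terminalSet _ ih _ (hw t)

theorem IsTerminalController.terminalSet_subset_feasibleSet (hq : ∀ x, 0 ≤ S.stateCost x)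
    (hr : ∀ u, 0 ≤ S.inputCost u) {K : E →ₗ[ℝ] F} (hK : S.IsTerminalController K) (T : ℕ) :
    S.terminalSet ⊆ S.feasibleSet T := by
  refine fun x₀ hx₀ => ⟨S.terminalState K, S.terminalInput K, isResponse_terminal K, ?_, ?_⟩
  · intro w hw
    have hmem := hK.terminalState_mem (δ := Fin.cons x₀ w) hx₀ hw
    exact ⟨fun t => hK.mem_constraints _ (hmem t.castSucc), hmem (Fin.last T)⟩
  · intro w
    have hcost := runningCost_add_terminalCost_le hK (isTrajectory_terminal K (Fin.cons 0 w))
    have hinit : S.terminalCost (S.terminalState K (Fin.cons 0 w : Fin (T + 1) → E) 0) = 0 :=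
      map_zero S.terminalCost
    rw [hinit, zero_add] at hcost
    exact hcost.trans (le_add_of_nonneg_right (clairvoyantCost_nonneg hq hr _))

end TerminalPolicy

section Shift

/-- Rewinds time by one step: the rewound disturbance starts at the multiple `l (δ 0) • x` of `x`,
and makes up for the difference between its nominal successor `l (δ 0) • y` and `δ 0`. -/
def rewind (l : Module.Dual ℝ E) (x y : E) : (Fin (T + 2) → E) →ₗ[ℝ] (Fin (T + 2) → E) :=
  LinearMap.pi <| Fin.cons (l.smulRight x ∘ₗ LinearMap.proj 0) <|
    Fin.cons ((LinearMap.id - l.smulRight y) ∘ₗ LinearMap.proj 0) fun t =>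
      LinearMap.proj t.succ.castSucc

lemma rewind_apply (l : Module.Dual ℝ E) (x y : E) (δ : Fin (T + 2) → E) :
    rewind l x y δ =
      Fin.cons (l (δ 0) • x) (Fin.cons (δ 0 - l (δ 0) • y) (Fin.init (Fin.tail δ))) := by
  funext s
  refine Fin.cases rfl (fun s => ?_) s
  exact Fin.cases rfl (fun _ => rfl) s

lemma rewind_eq_zero (l : Module.Dual ℝ E) (x y : E) {δ : Fin (T + 2) → E} {t : Fin (T + 1)}
    (hδ : ∀ s ≤ t.castSucc, δ s = 0) {s : Fin (T + 2)} (hs : s ≤ t.succ) :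
    rewind l x y δ s = 0 := by
  have h₀ : δ 0 = 0 := hδ 0 (Fin.zero_le _)
  rw [rewind_apply, h₀, map_zero, zero_smul, zero_smul, sub_zero]
  induction s using Fin.cases with
  | zero => rfl
  | succ s =>
    induction s using Fin.cases with
    | zero => rfl
    | succ s =>
      exact hδ s.succ.castSucc (Fin.castSucc_le_castSucc_iff.2 (Fin.succ_le_succ_iff.1 hs))

variable {X : (Fin (T + 2) → E) →ₗ[ℝ] (Fin (T + 2) → E)}
  {U : (Fin (T + 2) → E) →ₗ[ℝ] (Fin (T + 1) → F)} {x y : E} {l : Module.Dual ℝ E} {K : E →ₗ[ℝ] F}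

lemma IsResponse.state_rewind_one (h : S.IsResponse X U)
    (hy : y = S.A x + S.B (U (Fin.cons x 0) 0)) (δ : Fin (T + 2) → E) :
    X (rewind l x y δ) 1 = δ 0 := by
  obtain ⟨h₀, hstep⟩ := h.isTrajectory (rewind l x y δ)
  have hinput : U (rewind l x y δ) 0 = l (δ 0) • U (Fin.cons x 0) 0 := by
    rw [← Pi.smul_apply, ← map_smul]
    refine h.input_congr fun s hs => ?_
    rw [Fin.castSucc_zero, Fin.le_zero_iff] at hs
    rw [hs]
    rfl
  calc X (rewind l x y δ) 1
      = S.A (l (δ 0) • x) + S.B (l (δ 0) • U (Fin.cons x 0) 0) + (δ 0 - l (δ 0) • y) := by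
        rw [← hinput]
        exact (hstep 0).trans (by rw [Fin.castSucc_zero, h₀]; rfl)
    _ = δ 0 := by rw [hy, map_smul, map_smul, smul_add, add_sub_cancel]

/-- The state response after rewinding by `ρ`, shifting by one step and appending the feedback
`u = K x`. -/
def shiftState (S : RobustLQ E F) (K : E →ₗ[ℝ] F)
    (X ρ : (Fin (T + 2) → E) →ₗ[ℝ] (Fin (T + 2) → E)) :
    (Fin (T + 2) → E) →ₗ[ℝ] (Fin (T + 2) → E) :=
  LinearMap.pi <| Fin.snoc (fun t => LinearMap.proj t.succ ∘ₗ X ∘ₗ ρ)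
    ((S.A + S.B ∘ₗ K) ∘ₗ LinearMap.proj (Fin.last _) ∘ₗ X ∘ₗ ρ + LinearMap.proj (Fin.last _))

/-- The input response belonging to `shiftState`. -/
def shiftInput (K : E →ₗ[ℝ] F) (X ρ : (Fin (T + 2) → E) →ₗ[ℝ] (Fin (T + 2) → E))
    (U : (Fin (T + 2) → E) →ₗ[ℝ] (Fin (T + 1) → F)) :
    (Fin (T + 2) → E) →ₗ[ℝ] (Fin (T + 1) → F) :=
  LinearMap.pi <| Fin.snoc (fun t => LinearMap.proj t.succ ∘ₗ U ∘ₗ ρ)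
    (K ∘ₗ LinearMap.proj (Fin.last _) ∘ₗ X ∘ₗ ρ)

lemma shiftState_apply (ρ : (Fin (T + 2) → E) →ₗ[ℝ] (Fin (T + 2) → E)) (δ : Fin (T + 2) → E) :
    S.shiftState K X ρ δ = Fin.snoc (Fin.tail (X (ρ δ)))
      (S.A (X (ρ δ) (Fin.last _)) + S.B (K (X (ρ δ) (Fin.last _))) + δ (Fin.last _)) := by
  funext t
  induction t using Fin.lastCases <;> simp [shiftState, Fin.tail]

lemma shiftInput_apply (ρ : (Fin (T + 2) → E) →ₗ[ℝ] (Fin (T + 2) → E)) (δ : Fin (T + 2) → E) :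
    shiftInput K X ρ U δ = Fin.snoc (Fin.tail (U (ρ δ))) (K (X (ρ δ) (Fin.last _))) := by
  funext t
  induction t using Fin.lastCases <;> simp [shiftInput, Fin.tail]

lemma IsResponse.shift (h : S.IsResponse X U) (hy : y = S.A x + S.B (U (Fin.cons x 0) 0)) :
    S.IsResponse (S.shiftState K X (rewind l x y)) (shiftInput K X (rewind l x y) U) where
  isTrajectory δ := by
    have hδ : (Fin.cons (X (rewind l x y δ) 1) (Fin.snoc (Fin.tail (Fin.tail (rewind l x y δ)))
        (δ (Fin.last _)) : Fin (T + 1) → E) : Fin (T + 2) → E) = δ := by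
      rw [h.state_rewind_one hy, rewind_apply, Fin.tail_cons, Fin.tail_cons]
      exact (congrArg _ (Fin.snoc_init_self (Fin.tail δ))).trans (Fin.cons_self_tail δ)
    have htraj := (h.isTrajectory (rewind l x y δ)).snoc_tail
      (K (X (rewind l x y δ) (Fin.last _))) (δ (Fin.last _))
    rwa [hδ, ← shiftState_apply, ← shiftInput_apply] at htraj
  input_eq_zero δ t hδ := by
    rw [shiftInput_apply]
    induction t using Fin.lastCases with
    | last =>
      rw [Fin.snoc_last, ← map_zero K]
      exact congrArg K (h.state_eq_zero fun s hs => rewind_eq_zero l x y hδ hs)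
    | cast t =>
      rw [Fin.snoc_castSucc]
      exact h.input_eq_zero _ t.succ fun s hs => rewind_eq_zero l x y hδ hs

lemma IsSafe.shift (h : S.IsSafe x X U) (hK : S.IsTerminalController K) {z : E} (hl : l z = 1)
    (hz : z - y ∈ S.disturbances) :
    S.IsSafe z (S.shiftState K X (rewind l x y)) (shiftInput K X (rewind l x y) U) := by
  intro w hw
  have hrewind : rewind l x y (Fin.cons z w : Fin (T + 2) → E) =
      Fin.cons x (Fin.cons (z - y) (Fin.init w)) := by
    rw [rewind_apply, Fin.cons_zero, Fin.tail_cons, hl, one_smul, one_smul]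
  obtain ⟨hconstr, hterm⟩ := h (Fin.cons (z - y) (Fin.init w)) <|
    Fin.cases hz fun t => hw t.castSucc
  rw [← hrewind] at hconstr hterm
  rw [shiftState_apply, shiftInput_apply]
  refine ⟨fun t => ?_, ?_⟩
  · induction t using Fin.lastCases with
    | last =>
      simp only [Fin.snoc_castSucc, Fin.snoc_last]
      exact hK.mem_constraints _ hterm
    | cast t =>
      simp only [Fin.snoc_castSucc]
      exact hconstr t.succ
  · rw [Fin.snoc_last]
    exact hK.mem_terminalSet _ hterm _ (hw (Fin.last T))

lemma HasRegretBound.shift (h : S.HasRegretBound X U) (hq : ∀ x, 0 ≤ S.stateCost x)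
    (hr : ∀ u, 0 ≤ S.inputCost u) (hXU : S.IsResponse X U) (hK : S.IsTerminalController K) :
    S.HasRegretBound (S.shiftState K X (rewind l x y)) (shiftInput K X (rewind l x y) U) := by
  intro w
  have hrewind : rewind l x y (Fin.cons 0 w : Fin (T + 2) → E) =
      Fin.cons 0 (Fin.cons 0 (Fin.init w)) := by
    rw [rewind_apply, Fin.cons_zero, Fin.tail_cons, map_zero, zero_smul, zero_smul, sub_zero]
  have hinit : (Fin.cons 0 (Fin.cons 0 (Fin.init w) : Fin (T + 1) → E) : Fin (T + 2) → E) =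
      Fin.cons 0 (Fin.init (Fin.cons 0 w : Fin (T + 2) → E)) :=
    congrArg _ (funext (Fin.cases rfl fun _ => rfl))
  rw [shiftState_apply, shiftInput_apply, hrewind, Fin.snoc_last]
  have hold := h (Fin.cons 0 (Fin.init w))
  have hclairvoyant : S.clairvoyantCost (Fin.cons 0 (Fin.cons 0 (Fin.init w)) : Fin (T + 2) → E) ≤
      S.clairvoyantCost (Fin.cons 0 w : Fin (T + 2) → E) :=
    hinit ▸ clairvoyantCost_cons_zero_init_le hq hr ⟨_, _, _, hXU.isTrajectory _, rfl⟩
  have hsupply : ∑ t, S.supply ((Fin.cons 0 (Fin.init w) : Fin (T + 1) → E) t) +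
      S.supply (w (Fin.last T)) = ∑ t, S.supply (w t) := by
    rw [Fin.sum_univ_succ, Fin.sum_univ_castSucc]
    simp [Fin.init]
  set ξ := X (Fin.cons 0 (Fin.cons 0 (Fin.init w)))
  set υ := U (Fin.cons 0 (Fin.cons 0 (Fin.init w)))
  have hcost := runningCost_snoc_tail (S := S) ξ υ (S.A (ξ (Fin.last _)) +
    S.B (K (ξ (Fin.last _))) + w (Fin.last T)) (K (ξ (Fin.last _)))
  have hdissipation := hK.dissipation (ξ (Fin.last _)) (w (Fin.last T))
  have hfirst := add_nonneg (hq (ξ 0)) (hr (υ 0))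
  have hlast : (Fin.cons 0 w : Fin (T + 2) → E) (Fin.last _) = w (Fin.last T) := rfl
  rw [hlast]
  linarith

end Shift

theorem IsAdmissible.successor_mem_feasibleSet (hq : ∀ x, 0 ≤ S.stateCost x)
    (hr : ∀ u, 0 ≤ S.inputCost u) {K : E →ₗ[ℝ] F} (hK : S.IsTerminalController K)
    (h0 : 0 ∈ S.terminalSet) {x : E} {X : (Fin (T + 2) → E) →ₗ[ℝ] (Fin (T + 2) → E)}
    {U : (Fin (T + 2) → E) →ₗ[ℝ] (Fin (T + 1) → F)} (h : S.IsAdmissible x X U)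
    {w : E} (hw : w ∈ S.disturbances) :
    S.A x + S.B (U (Fin.cons x 0) 0) + w ∈ S.feasibleSet (T + 1) := by
  set y := S.A x + S.B (U (Fin.cons x 0) 0) with hy
  by_cases hz : y + w = 0
  · rw [hz]
    exact hK.terminalSet_subset_feasibleSet hq hr (T + 1) h0
  · obtain ⟨l, hl⟩ := Module.Projective.exists_dual_eq_one ℝ hz
    exact ⟨_, _, h.toIsResponse.shift hy, h.safe.shift hK hl (by rwa [add_sub_cancel_left]),
      h.regret.shift hq hr h.toIsResponse hK⟩

end RobustLQ

/-! ### Least squares and the Riccati equation -/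

section QuadraticForms

variable {ι : Type*} [Fintype ι]

lemma toQuadraticForm'_apply [DecidableEq ι] (M : Matrix ι ι ℝ) (v : ι → ℝ) :
    M.toQuadraticForm' v = v ⬝ᵥ M *ᵥ v :=
  Matrix.toLinearMap₂'_apply' M v v

lemma dotProduct_mulVec_comm_of_isHermitian {M : Matrix ι ι ℝ} (hM : M.IsHermitian)
    (v w : ι → ℝ) : v ⬝ᵥ M *ᵥ w = w ⬝ᵥ M *ᵥ v := by
  have hMT : Mᵀ = M := hM
  rw [← Matrix.dotProduct_transpose_mulVec, hMT]

lemma dotProduct_mulVec_add_of_isHermitian {M : Matrix ι ι ℝ} (hM : M.IsHermitian)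
    (v w : ι → ℝ) :
    (v + w) ⬝ᵥ M *ᵥ (v + w) = v ⬝ᵥ M *ᵥ v + 2 * (w ⬝ᵥ M *ᵥ v) + w ⬝ᵥ M *ᵥ w := by
  rw [mulVec_add, dotProduct_add, add_dotProduct, add_dotProduct,
    dotProduct_mulVec_comm_of_isHermitian hM v w]
  ring

lemma two_mul_dotProduct_le [DecidableEq ι] {N : Matrix ι ι ℝ} (hN : N.PosDef) (v w : ι → ℝ) :
    2 * (v ⬝ᵥ w) ≤ v ⬝ᵥ N *ᵥ v + w ⬝ᵥ N⁻¹ *ᵥ w := by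
  have hinv : N *ᵥ (N⁻¹ *ᵥ w) = w := by
    rw [mulVec_mulVec, Matrix.mul_nonsing_inv _ ((Matrix.isUnit_iff_isUnit_det N).1 hN.isUnit),
      one_mulVec]
  have hsq : 0 ≤ (v + -(N⁻¹ *ᵥ w)) ⬝ᵥ N *ᵥ (v + -(N⁻¹ *ᵥ w)) :=
    hN.posSemidef.dotProduct_mulVec_nonneg _
  have hcross : (N⁻¹ *ᵥ w) ⬝ᵥ N *ᵥ v = v ⬝ᵥ w := by
    rw [dotProduct_mulVec_comm_of_isHermitian hN.isHermitian, hinv]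
  rw [dotProduct_mulVec_add_of_isHermitian hN.isHermitian, mulVec_neg, neg_dotProduct,
    neg_dotProduct, dotProduct_neg, hcross, hinv, neg_neg, dotProduct_comm (N⁻¹ *ᵥ w)] at hsq
  linarith

end QuadraticForms

section LeastSquares

variable {ι κ : Type*} [Fintype ι] [Fintype κ] {F : Matrix ι κ ℝ} {Q : Matrix ι ι ℝ}
  {R : Matrix κ κ ℝ}

lemma cost_of_stationary {u : κ → ℝ} {g : ι → ℝ}
    (hu : R *ᵥ u = -(Fᵀ *ᵥ (Q *ᵥ (F *ᵥ u + g)))) :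
    (F *ᵥ u + g) ⬝ᵥ Q *ᵥ (F *ᵥ u + g) + u ⬝ᵥ R *ᵥ u = g ⬝ᵥ Q *ᵥ (F *ᵥ u + g) := by
  rw [hu, dotProduct_neg, add_dotProduct, Matrix.dotProduct_transpose_mulVec,
    dotProduct_comm (Q *ᵥ _) (F *ᵥ u)]
  ring

lemma isLeast_cost_of_stationary (hQ : Q.PosSemidef) (hR : R.PosSemidef) {u : κ → ℝ} {g : ι → ℝ}
    (hu : R *ᵥ u = -(Fᵀ *ᵥ (Q *ᵥ (F *ᵥ u + g)))) :
    IsLeast (Set.range fun v => (F *ᵥ v + g) ⬝ᵥ Q *ᵥ (F *ᵥ v + g) + v ⬝ᵥ R *ᵥ v)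
      (g ⬝ᵥ Q *ᵥ (F *ᵥ u + g)) := by
  refine ⟨⟨u, cost_of_stationary hu⟩, ?_⟩
  rintro _ ⟨v, rfl⟩
  obtain ⟨d, rfl⟩ : ∃ d, v = u + d := ⟨v - u, (add_sub_cancel u v).symm⟩
  have hcross : d ⬝ᵥ R *ᵥ u = -((F *ᵥ d) ⬝ᵥ Q *ᵥ (F *ᵥ u + g)) := by
    rw [hu, dotProduct_neg, Matrix.dotProduct_transpose_mulVec, dotProduct_comm]
  have hsplit : F *ᵥ (u + d) + g = (F *ᵥ u + g) + F *ᵥ d := by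
    rw [mulVec_add, add_right_comm]
  have hQd : 0 ≤ (F *ᵥ d) ⬝ᵥ Q *ᵥ (F *ᵥ d) := hQ.dotProduct_mulVec_nonneg _
  have hRd : 0 ≤ d ⬝ᵥ R *ᵥ d := hR.dotProduct_mulVec_nonneg _
  change _ ≤ (F *ᵥ (u + d) + g) ⬝ᵥ Q *ᵥ (F *ᵥ (u + d) + g) + (u + d) ⬝ᵥ R *ᵥ (u + d)
  rw [hsplit, dotProduct_mulVec_add_of_isHermitian hQ.isHermitian,
    dotProduct_mulVec_add_of_isHermitian hR.isHermitian, ← cost_of_stationary hu, hcross]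
  linarith

variable [DecidableEq ι] [DecidableEq κ]

lemma isUnit_one_add_mul_inv_mul (hQ : Q.PosSemidef) (hR : R.PosDef) :
    IsUnit (1 + F * R⁻¹ * Fᵀ * Q) := by
  have hsum : (R + Fᵀ * Q * F).PosDef :=
    hR.add_posSemidef (hQ.conjTranspose_mul_mul_same F)
  have hfactor : 1 + R⁻¹ * Fᵀ * Q * F = R⁻¹ * (R + Fᵀ * Q * F) := by
    rw [mul_add, Matrix.nonsing_inv_mul _ ((Matrix.isUnit_iff_isUnit_det R).1 hR.isUnit)]
    simp only [Matrix.mul_assoc]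
  rw [Matrix.isUnit_iff_isUnit_det, Matrix.mul_assoc, Matrix.mul_assoc,
    Matrix.det_one_add_mul_comm, ← Matrix.mul_assoc R⁻¹, hfactor, ← Matrix.isUnit_iff_isUnit_det]
  exact hR.inv.isUnit.mul hsum.isUnit

lemma isLeast_cost (hQ : Q.PosSemidef) (hR : R.PosDef) (g : ι → ℝ) :
    IsLeast (Set.range fun u => (F *ᵥ u + g) ⬝ᵥ Q *ᵥ (F *ᵥ u + g) + u ⬝ᵥ R *ᵥ u)
      (g ⬝ᵥ (Q * (1 + F * R⁻¹ * Fᵀ * Q)⁻¹) *ᵥ g) := by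
  set M := 1 + F * R⁻¹ * Fᵀ * Q with hM
  have hMdet : IsUnit M.det :=
    (Matrix.isUnit_iff_isUnit_det M).1 (isUnit_one_add_mul_inv_mul hQ hR)
  have hRdet : IsUnit R.det := (Matrix.isUnit_iff_isUnit_det R).1 hR.isUnit
  set u := -(R⁻¹ *ᵥ (Fᵀ *ᵥ (Q *ᵥ (M⁻¹ *ᵥ g)))) with hu
  have hoptimal : F *ᵥ u + g = M⁻¹ *ᵥ g := by
    have hMg : M *ᵥ (M⁻¹ *ᵥ g) = g := by
      rw [mulVec_mulVec, Matrix.mul_nonsing_inv _ hMdet, one_mulVec]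
    have hMsplit (v : ι → ℝ) : M *ᵥ v = v + F *ᵥ (R⁻¹ *ᵥ (Fᵀ *ᵥ (Q *ᵥ v))) := by
      simp only [hM, add_mulVec, one_mulVec, mulVec_mulVec, Matrix.mul_assoc]
    rw [hMsplit] at hMg
    rw [hu, mulVec_neg, neg_add_eq_iff_eq_add, add_comm, hMg]
  have hstationary : R *ᵥ u = -(Fᵀ *ᵥ (Q *ᵥ (F *ᵥ u + g))) := by
    rw [hoptimal, hu, mulVec_neg, mulVec_mulVec, Matrix.mul_nonsing_inv _ hRdet, one_mulVec]
  have hleast := isLeast_cost_of_stationary hQ hR.posSemidef hstationary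
  rwa [hoptimal, mulVec_mulVec] at hleast

lemma isHermitian_mul_one_add_inv (hQ : Q.PosSemidef) (hR : R.PosDef) :
    (Q * (1 + F * R⁻¹ * Fᵀ * Q)⁻¹).IsHermitian := by
  set M := 1 + F * R⁻¹ * Fᵀ * Q with hM
  have hMunit : IsUnit M.det :=
    (Matrix.isUnit_iff_isUnit_det M).1 (isUnit_one_add_mul_inv_mul hQ hR)
  have hQT : Qᵀ = Q := hQ.isHermitian
  have hRT : (R⁻¹)ᵀ = R⁻¹ := hR.isHermitian.inv
  have hcomm : Mᵀ * Q = Q * M := by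
    rw [hM]
    simp only [transpose_add, transpose_one, transpose_mul, transpose_transpose, hQT, hRT,
      Matrix.mul_assoc, add_mul, mul_add, one_mul, mul_one]
  rw [Matrix.IsHermitian, conjTranspose_eq_transpose_of_trivial, transpose_mul, hQT,
    transpose_nonsing_inv]
  calc Mᵀ⁻¹ * Q = Mᵀ⁻¹ * (Mᵀ * Q * M⁻¹) := by
        rw [hcomm, Matrix.mul_nonsing_inv_cancel_right _ _ hMunit]
    _ = Q * M⁻¹ := by
        rw [Matrix.mul_assoc,
          Matrix.nonsing_inv_mul_cancel_left _ _ (Matrix.isUnit_det_transpose M hMunit)]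

end LeastSquares

section Riccati

variable {ι κ : Type*} [Fintype ι] [Fintype κ] [DecidableEq κ]
  {A Q P Pbar : Matrix ι ι ℝ} {B : Matrix ι κ ℝ} {R : Matrix κ κ ℝ} {K : Matrix κ ι ℝ} {γ : ℝ}

lemma riccati_cost (hR : R.PosDef) (hPbar : Pbar.PosSemidef)
    (hRic : P = Q + Aᵀ * Pbar * A - Aᵀ * Pbar * B * (R + Bᵀ * Pbar * B)⁻¹ * Bᵀ * Pbar * A)
    (hK : K = -((R + Bᵀ * Pbar * B)⁻¹ * Bᵀ * Pbar * A)) (x : ι → ℝ) :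
    x ⬝ᵥ Q *ᵥ x + (K *ᵥ x) ⬝ᵥ R *ᵥ (K *ᵥ x) +
        (A *ᵥ x + B *ᵥ (K *ᵥ x)) ⬝ᵥ Pbar *ᵥ (A *ᵥ x + B *ᵥ (K *ᵥ x)) =
      x ⬝ᵥ P *ᵥ x := by
  have hunit : IsUnit (R + Bᵀ * Pbar * B).det :=
    (Matrix.isUnit_iff_isUnit_det _).1
      (hR.add_posSemidef (hPbar.conjTranspose_mul_mul_same B)).isUnit
  have hgain : (R + Bᵀ * Pbar * B) * K = -(Bᵀ * Pbar * A) := by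
    rw [hK, Matrix.mul_neg, Matrix.mul_assoc _ Bᵀ, Matrix.mul_assoc _ (Bᵀ * Pbar),
      Matrix.mul_nonsing_inv_cancel_left _ _ hunit]
  have hstationary : R *ᵥ (K *ᵥ x) = -(Bᵀ *ᵥ (Pbar *ᵥ (B *ᵥ (K *ᵥ x) + A *ᵥ x))) := by
    have hgainx := congrArg (· *ᵥ x) hgain
    simp only [Matrix.add_mul, add_mulVec, neg_mulVec, ← mulVec_mulVec] at hgainx
    simp only [mulVec_add]
    rw [neg_add, ← hgainx]
    abel
  have hP : P = Q + Aᵀ * Pbar * (B * K + A) := by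
    rw [hRic, hK]
    simp only [Matrix.mul_assoc, Matrix.mul_add, Matrix.mul_neg]
    abel
  have hcost := cost_of_stationary hstationary
  rw [add_comm (A *ᵥ x), add_assoc, add_comm (K *ᵥ x ⬝ᵥ _), hcost, hP]
  simp only [add_mulVec, dotProduct_add, ← mulVec_mulVec]
  rw [Matrix.dotProduct_transpose_mulVec, dotProduct_comm (A *ᵥ x)]

variable [DecidableEq ι]

lemma posSemidef_add_mul_inv_mul (hP : P.PosSemidef) (hγP : (γ ^ 2 • 1 - P).PosDef) :
    (P + P * (γ ^ 2 • 1 - P)⁻¹ * P).PosSemidef := by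
  have hPH : Pᴴ = P := hP.isHermitian
  have hprod := hγP.inv.posSemidef.conjTranspose_mul_mul_same P
  rw [hPH] at hprod
  exact hP.add hprod

lemma dotProduct_mulVec_add_le (hP : P.IsHermitian) (hγP : (γ ^ 2 • 1 - P).PosDef) (y w : ι → ℝ) :
    (y + w) ⬝ᵥ P *ᵥ (y + w) ≤
      y ⬝ᵥ (P + P * (γ ^ 2 • 1 - P)⁻¹ * P) *ᵥ y + γ ^ 2 * (w ⬝ᵥ w) := by
  have hyoung := two_mul_dotProduct_le hγP w (P *ᵥ y)
  have hPy : (P *ᵥ y) ⬝ᵥ (γ ^ 2 • 1 - P)⁻¹ *ᵥ (P *ᵥ y) =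
      y ⬝ᵥ (P * (γ ^ 2 • 1 - P)⁻¹ * P) *ᵥ y := by
    rw [← mulVec_mulVec, ← mulVec_mulVec, dotProduct_mulVec_comm_of_isHermitian hP, dotProduct_comm]
  rw [hPy, sub_mulVec, smul_mulVec, one_mulVec, dotProduct_sub, dotProduct_smul,
    smul_eq_mul] at hyoung
  rw [dotProduct_mulVec_add_of_isHermitian hP, add_mulVec, dotProduct_add]
  linarith

theorem riccati_dissipation (hR : R.PosDef) (hP : P.PosSemidef) (hγP : (γ ^ 2 • 1 - P).PosDef)
    (hPbar : Pbar = P + P * (γ ^ 2 • 1 - P)⁻¹ * P)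
    (hRic : P = Q + Aᵀ * Pbar * A - Aᵀ * Pbar * B * (R + Bᵀ * Pbar * B)⁻¹ * Bᵀ * Pbar * A)
    (hK : K = -((R + Bᵀ * Pbar * B)⁻¹ * Bᵀ * Pbar * A)) (x w : ι → ℝ) :
    x ⬝ᵥ Q *ᵥ x + (K *ᵥ x) ⬝ᵥ R *ᵥ (K *ᵥ x) +
        (A *ᵥ x + B *ᵥ (K *ᵥ x) + w) ⬝ᵥ P *ᵥ (A *ᵥ x + B *ᵥ (K *ᵥ x) + w) ≤
      x ⬝ᵥ P *ᵥ x + γ ^ 2 * (w ⬝ᵥ w) := by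
  have hdisturb := dotProduct_mulVec_add_le hP.isHermitian hγP (A *ᵥ x + B *ᵥ (K *ᵥ x)) w
  have hnominal :=
    riccati_cost hR (hPbar ▸ posSemidef_add_mul_inv_mul hP hγP) hRic hK x
  rw [← hPbar] at hdisturb
  linarith

end Riccati

/-! ### Stacked matrices -/

section Blocks

variable {σ τ ι κ : Type*} [Fintype τ] [Fintype κ]

lemma dotProduct_eq_sum_curry (v w : τ × κ → ℝ) :
    v ⬝ᵥ w = ∑ t, Function.curry v t ⬝ᵥ Function.curry w t :=
  Fintype.sum_prod_type _

lemma curry_mulVec_of_block [DecidableEq τ] {D : Matrix (σ × ι) (τ × κ) ℝ} {M : Matrix ι κ ℝ}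
    {t : σ} {s : τ} (hD : ∀ i r j, D (t, i) (r, j) = if r = s then M i j else 0)
    (v : τ × κ → ℝ) : Function.curry (D *ᵥ v) t = M *ᵥ Function.curry v s := by
  funext i
  simp only [Function.curry_apply, mulVec, dotProduct, Fintype.sum_prod_type, hD, ite_mul, zero_mul,
    Finset.sum_ite_irrel, Finset.sum_const_zero, Finset.sum_ite_eq', Finset.mem_univ, if_true]

/-- A block matrix as a linear map between sequences of vectors. -/
def blockLin [DecidableEq τ] [DecidableEq κ] :
    Matrix (σ × ι) (τ × κ) ℝ ≃ₗ[ℝ] ((τ → κ → ℝ) →ₗ[ℝ] (σ → ι → ℝ)) :=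
  Matrix.toLin'.trans ((LinearEquiv.curry ℝ ℝ τ κ).arrowCongr (LinearEquiv.curry ℝ ℝ σ ι))

lemma blockLin_apply [DecidableEq τ] [DecidableEq κ] (D : Matrix (σ × ι) (τ × κ) ℝ)
    (v : τ → κ → ℝ) : blockLin D v = Function.curry (D *ᵥ Function.uncurry v) :=
  rfl

lemma blockLin_curry [DecidableEq τ] [DecidableEq κ] (D : Matrix (σ × ι) (τ × κ) ℝ)
    (v : τ × κ → ℝ) : blockLin D (Function.curry v) = Function.curry (D *ᵥ v) :=
  rfl

lemma forall_block_eq_zero_iff [DecidableEq τ] [DecidableEq κ] (D : Matrix (σ × ι) (τ × κ) ℝ)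
    (t : σ) (past : τ → Prop) :
    (∀ i s j, ¬past s → D (t, i) (s, j) = 0) ↔
      ∀ v : τ → κ → ℝ, (∀ s, past s → v s = 0) → blockLin D v t = 0 := by
  refine ⟨fun hD v hv => funext fun i => Finset.sum_eq_zero fun q _ => ?_, fun h i s j hs => ?_⟩
  · by_cases hq : past q.1
    · exact mul_eq_zero_of_right _ (congrFun (hv q.1 hq) q.2)
    · exact mul_eq_zero_of_left (hD i q.1 q.2 hq) _
  · have hpast (r : τ) (hr : past r) :
        Function.curry (Pi.single (s, j) (1 : ℝ) : τ × κ → ℝ) r = 0 := by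
      have hrs : r ≠ s := fun hrs => hs (hrs ▸ hr)
      exact funext fun k => Pi.single_eq_of_ne (fun heq => hrs (congrArg Prod.fst heq)) 1
    have hcol := congrFun (h (Function.curry (Pi.single (s, j) 1)) hpast) i
    rwa [blockLin_curry, mulVec_single_one] at hcol

end Blocks

section Stacked

variable {n m T : ℕ}

lemma curry_Zshift_mulVec_zero (v : SIdx n T → ℝ) :
    Function.curry (Zshift n T *ᵥ v) 0 = 0 := by
  funext i
  simp [Function.curry_apply, Zshift, mulVec, dotProduct]

lemma curry_Zshift_mulVec_succ (v : SIdx n T → ℝ) (t : Fin T) :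
    Function.curry (Zshift n T *ᵥ v) t.succ = Function.curry v t.castSucc := by
  rw [curry_mulVec_of_block (M := 1) (s := t.castSucc), one_mulVec]
  intro i r j
  simp [Zshift, one_apply, Fin.ext_iff, ← ite_and, eq_comm]

lemma curry_bigA_mulVec (A : Matrix (Fin n) (Fin n) ℝ) (v : SIdx n T → ℝ) (t : Fin (T + 1)) :
    Function.curry (bigA n T A *ᵥ v) t = A *ᵥ Function.curry v t :=
  curry_mulVec_of_block (by simp [bigA, eq_comm]) v

lemma curry_bigB_mulVec (B : Matrix (Fin n) (Fin m) ℝ) (v : UIdx m T → ℝ) (t : Fin T) :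
    Function.curry (bigB n m T B *ᵥ v) t.castSucc = B *ᵥ Function.curry v t :=
  curry_mulVec_of_block (by simp [bigB, Fin.ext_iff, eq_comm]) v

lemma curry_bigR_mulVec (R : Matrix (Fin m) (Fin m) ℝ) (v : UIdx m T → ℝ) (t : Fin T) :
    Function.curry (bigR m T R *ᵥ v) t = R *ᵥ Function.curry v t :=
  curry_mulVec_of_block (by simp [bigR, eq_comm]) v

lemma curry_bigQbar_mulVec (Q P : Matrix (Fin n) (Fin n) ℝ) (v : SIdx n T → ℝ)
    (t : Fin (T + 1)) :
    Function.curry (bigQbar n T Q P *ᵥ v) t =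
      (if (t : ℕ) < T then Q else P) *ᵥ Function.curry v t := by
  refine curry_mulVec_of_block (fun i r j => ?_) v
  by_cases ht : (t : ℕ) < T <;> simp [bigQbar, ht, eq_comm]

lemma bigQ_eq_bigQbar (Q : Matrix (Fin n) (Fin n) ℝ) : bigQ n T Q = bigQbar n T Q 0 := by
  ext p q
  simp [bigQ, bigQbar, ite_and]

lemma dotProduct_bigR_mulVec (R : Matrix (Fin m) (Fin m) ℝ) (u : UIdx m T → ℝ) :
    u ⬝ᵥ bigR m T R *ᵥ u = ∑ t, Function.curry u t ⬝ᵥ R *ᵥ Function.curry u t := by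
  simp only [dotProduct_eq_sum_curry, curry_bigR_mulVec]

lemma dotProduct_bigQbar_mulVec (Q P : Matrix (Fin n) (Fin n) ℝ) (x : SIdx n T → ℝ) :
    x ⬝ᵥ bigQbar n T Q P *ᵥ x =
      ∑ t : Fin T, Function.curry x t.castSucc ⬝ᵥ Q *ᵥ Function.curry x t.castSucc +
        Function.curry x (Fin.last T) ⬝ᵥ P *ᵥ Function.curry x (Fin.last T) := by
  simp [dotProduct_eq_sum_curry, curry_bigQbar_mulVec, Fin.sum_univ_castSucc]

lemma isHermitian_bigQbar {Q P : Matrix (Fin n) (Fin n) ℝ} (hQ : Q.IsHermitian)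
    (hP : P.IsHermitian) : (bigQbar n T Q P).IsHermitian := by
  refine Matrix.IsHermitian.ext fun p q => ?_
  simp only [bigQbar, of_apply, star_trivial]
  by_cases hpq : p.1 = q.1
  · simp only [hpq, if_true, ← hQ.apply p.2 q.2, ← hP.apply p.2 q.2, star_trivial]
  · rw [if_neg hpq, if_neg (Ne.symm hpq)]

lemma posSemidef_bigQ {Q : Matrix (Fin n) (Fin n) ℝ} (hQ : Q.PosSemidef) :
    (bigQ n T Q).PosSemidef := by
  rw [bigQ_eq_bigQbar]
  refine .of_dotProduct_mulVec_nonneg (isHermitian_bigQbar hQ.isHermitian isHermitian_zero)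
    fun x => ?_
  rw [star_trivial, dotProduct_bigQbar_mulVec, zero_mulVec, dotProduct_zero, add_zero]
  exact Finset.sum_nonneg fun t _ => hQ.dotProduct_mulVec_nonneg _

lemma posDef_bigR {R : Matrix (Fin m) (Fin m) ℝ} (hR : R.PosDef) : (bigR m T R).PosDef := by
  have hkron : bigR m T R = (1 : Matrix (Fin T) (Fin T) ℝ).kronecker R := by
    ext p q
    simp [bigR, one_apply]
  exact hkron ▸ Matrix.PosDef.one.kronecker hR

lemma assemble_eq_uncurry (x₀ : Fin n → ℝ) (w : Fin T × Fin n → ℝ) :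
    assemble n T x₀ w = Function.uncurry (Fin.cons x₀ (Function.curry w)) := by
  funext ⟨t, i⟩
  induction t using Fin.cases <;> rfl

lemma dotProduct_assemble_zero (v : SIdx n T → ℝ) (w : Fin T × Fin n → ℝ) :
    v ⬝ᵥ assemble n T 0 w = (fun c : Fin T × Fin n => v (c.1.succ, c.2)) ⬝ᵥ w := by
  simp [dotProduct, Fintype.sum_prod_type, Fin.sum_univ_succ, assemble]

lemma mulVec_assemble_zero {ι : Type*} (M : Matrix ι (SIdx n T) ℝ) (w : Fin T × Fin n → ℝ) :
    M *ᵥ assemble n T 0 w = M.submatrix id (fun c => (c.1.succ, c.2)) *ᵥ w :=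
  funext fun _ => dotProduct_assemble_zero _ w

lemma stackW_mulVec (Φx : Matrix (SIdx n T) (SIdx n T) ℝ) (Φu : Matrix (UIdx m T) (SIdx n T) ℝ)
    (w : Fin T × Fin n → ℝ) :
    stackW n m T Φx Φu *ᵥ w = Sum.elim (Φx *ᵥ assemble n T 0 w) (Φu *ᵥ assemble n T 0 w) := by
  rw [mulVec_assemble_zero, mulVec_assemble_zero]
  funext r
  cases r <;> rfl

lemma dotProduct_submatrix_mulVec (C : Matrix (SIdx n T) (SIdx n T) ℝ) (w : Fin T × Fin n → ℝ) :
    w ⬝ᵥ C.submatrix (fun c => (c.1.succ, c.2)) (fun c => (c.1.succ, c.2)) *ᵥ w =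
      assemble n T 0 w ⬝ᵥ C *ᵥ assemble n T 0 w := by
  rw [dotProduct_comm (assemble n T 0 w), dotProduct_assemble_zero, mulVec_assemble_zero,
    dotProduct_comm]
  rfl

end Stacked

/-! ### The matrix formulation as a robust linear-quadratic problem -/

section Bridge

variable {n m T : ℕ} {A : Matrix (Fin n) (Fin n) ℝ} {B : Matrix (Fin n) (Fin m) ℝ}
  {Q : Matrix (Fin n) (Fin n) ℝ} {R : Matrix (Fin m) (Fin m) ℝ} {P : Matrix (Fin n) (Fin n) ℝ}
  {γ : ℝ} {W : Set (Fin n → ℝ)} {Zc : Set ((Fin n → ℝ) × (Fin m → ℝ))} {Zf : Set (Fin n → ℝ)}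

/-- The control problem behind `Π_T^γ` and `X_T^γ`: quadratic costs with matrices `Q`, `R`, `P`,
and `γ² ‖w‖²` as the supply. -/
def matrixLQ (A : Matrix (Fin n) (Fin n) ℝ) (B : Matrix (Fin n) (Fin m) ℝ)
    (Q : Matrix (Fin n) (Fin n) ℝ) (R : Matrix (Fin m) (Fin m) ℝ) (P : Matrix (Fin n) (Fin n) ℝ)
    (γ : ℝ) (W : Set (Fin n → ℝ)) (Zc : Set ((Fin n → ℝ) × (Fin m → ℝ))) (Zf : Set (Fin n → ℝ)) :
    RobustLQ (Fin n → ℝ) (Fin m → ℝ) where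
  A := A.mulVecLin
  B := B.mulVecLin
  stateCost := Q.toQuadraticForm'
  inputCost := R.toQuadraticForm'
  terminalCost := P.toQuadraticForm'
  supply := (γ ^ 2 • (1 : Matrix (Fin n) (Fin n) ℝ)).toQuadraticForm'
  disturbances := W
  constraints := Zc
  terminalSet := Zf

local notation "𝒮" => matrixLQ A B Q R P γ W Zc Zf

lemma supply_matrixLQ (w : Fin n → ℝ) : (𝒮).supply w = γ ^ 2 * (w ⬝ᵥ w) := by
  simp [matrixLQ, toQuadraticForm'_apply, smul_mulVec]

lemma runningCost_matrixLQ (x : SIdx n T → ℝ) (u : UIdx m T → ℝ) :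
    (𝒮).runningCost (Function.curry x) (Function.curry u) =
      x ⬝ᵥ bigQ n T Q *ᵥ x + u ⬝ᵥ bigR m T R *ᵥ u := by
  rw [bigQ_eq_bigQbar, dotProduct_bigQbar_mulVec, dotProduct_bigR_mulVec, zero_mulVec,
    dotProduct_zero, add_zero, ← Finset.sum_add_distrib]
  simp only [RobustLQ.runningCost, matrixLQ, toQuadraticForm'_apply]

lemma runningCost_add_terminalCost_matrixLQ (x : SIdx n T → ℝ) (u : UIdx m T → ℝ) :
    (𝒮).runningCost (Function.curry x) (Function.curry u) +
        (𝒮).terminalCost (Function.curry x (Fin.last T)) =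
      Sum.elim x u ⬝ᵥ bigS n m T Q P R *ᵥ Sum.elim x u := by
  rw [bigS, fromBlocks_mulVec, Sum.elim_comp_inl, Sum.elim_comp_inr, zero_mulVec, zero_mulVec,
    add_zero, zero_add, sumElim_dotProduct_sumElim, dotProduct_bigQbar_mulVec,
    dotProduct_bigR_mulVec]
  simp only [RobustLQ.runningCost, matrixLQ, toQuadraticForm'_apply, Finset.sum_add_distrib]
  ring

lemma isTrajectory_matrixLQ_iff (δ x : SIdx n T → ℝ) (u : UIdx m T → ℝ) :
    (𝒮).IsTrajectory (Function.curry δ) (Function.curry x) (Function.curry u) ↔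
      (1 - Zshift n T * bigA n T A) *ᵥ x - (Zshift n T * bigB n m T B) *ᵥ u = δ := by
  have hzero : Function.curry ((1 - Zshift n T * bigA n T A) *ᵥ x -
      (Zshift n T * bigB n m T B) *ᵥ u) 0 = Function.curry x 0 := by
    rw [sub_mulVec, one_mulVec, ← mulVec_mulVec, ← mulVec_mulVec]
    change _ - Function.curry (Zshift n T *ᵥ _) 0 - Function.curry (Zshift n T *ᵥ _) 0 = _
    rw [curry_Zshift_mulVec_zero, curry_Zshift_mulVec_zero, sub_zero, sub_zero]
    rfl
  have hsucc (t : Fin T) : Function.curry ((1 - Zshift n T * bigA n T A) *ᵥ x -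
      (Zshift n T * bigB n m T B) *ᵥ u) t.succ = Function.curry x t.succ -
        A *ᵥ Function.curry x t.castSucc - B *ᵥ Function.curry u t := by
    rw [sub_mulVec, one_mulVec, ← mulVec_mulVec, ← mulVec_mulVec]
    change _ - Function.curry (Zshift n T *ᵥ _) _ - Function.curry (Zshift n T *ᵥ _) _ = _
    rw [curry_Zshift_mulVec_succ, curry_Zshift_mulVec_succ, curry_bigA_mulVec, curry_bigB_mulVec]
    rfl
  rw [← Function.curry_injective.eq_iff, funext_iff, Fin.forall_fin_succ, hzero,
    RobustLQ.IsTrajectory]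
  refine and_congr_right fun _ => forall_congr' fun t => ?_
  rw [hsucc, sub_sub, sub_eq_iff_eq_add']
  rfl

lemma isUnit_one_sub_Zshift_mul_bigA (A : Matrix (Fin n) (Fin n) ℝ) :
    IsUnit (1 - Zshift n T * bigA n T A) := by
  rw [← mulVec_injective_iff_isUnit]
  refine (injective_iff_map_eq_zero (1 - Zshift n T * bigA n T A).mulVecLin).2 fun x hx => ?_
  have htraj : (matrixLQ A (0 : Matrix (Fin n) (Fin 0) ℝ) 0 0 0 0 ∅ ∅ ∅).IsTrajectory
      (Function.curry 0) (Function.curry x) (Function.curry 0) := by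
    rw [isTrajectory_matrixLQ_iff, mulVec_zero, sub_zero]
    exact hx
  exact Function.curry_injective <| funext fun t =>
    htraj.state_eq_zero t (fun _ _ => rfl) fun _ _ => rfl

lemma isTrajectory_matrixLQ_iff_eq (δ x : SIdx n T → ℝ) (u : UIdx m T → ℝ) :
    (𝒮).IsTrajectory (Function.curry δ) (Function.curry x) (Function.curry u) ↔
      bigF n m T A B *ᵥ u + bigG n T A *ᵥ δ = x := by
  have hdet := (Matrix.isUnit_iff_isUnit_det _).1 (isUnit_one_sub_Zshift_mul_bigA (T := T) A)
  rw [isTrajectory_matrixLQ_iff, bigF, bigG,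
    ← mulVec_mulVec u (1 - Zshift n T * bigA n T A)⁻¹, ← mulVec_add]
  constructor
  · rintro rfl
    rw [add_sub_cancel, mulVec_mulVec, Matrix.nonsing_inv_mul _ hdet, one_mulVec]
  · rintro rfl
    rw [mulVec_mulVec, Matrix.mul_nonsing_inv _ hdet, one_mulVec, add_sub_cancel_left]

lemma attainableCosts_matrixLQ (δ : SIdx n T → ℝ) :
    (𝒮).attainableCosts (Function.curry δ) = Set.range (costJ n m T A B Q R · δ) := by
  ext c
  constructor
  · rintro ⟨x, u, h, rfl⟩
    refine ⟨Function.uncurry u, ?_⟩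
    have hx := (isTrajectory_matrixLQ_iff_eq δ (Function.uncurry x) (Function.uncurry u)).1 h
    exact (runningCost_matrixLQ (Function.uncurry x) (Function.uncurry u)).symm ▸ hx ▸ rfl
  · rintro ⟨u, rfl⟩
    exact ⟨_, _, (isTrajectory_matrixLQ_iff_eq δ _ u).2 rfl, runningCost_matrixLQ _ _⟩

theorem clairvoyantCost_matrixLQ (hQ : Q.PosSemidef) (hR : R.PosDef) (δ : SIdx n T → ℝ) :
    (𝒮).clairvoyantCost (Function.curry δ) = δ ⬝ᵥ Cmat n m T A B Q R *ᵥ δ := by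
  have hleast := isLeast_cost (F := bigF n m T A B) (posSemidef_bigQ (T := T) hQ)
    (posDef_bigR (T := T) hR) (bigG n T A *ᵥ δ)
  rw [RobustLQ.clairvoyantCost, attainableCosts_matrixLQ]
  refine hleast.csInf_eq.trans ?_
  rw [Cmat, Matrix.mul_assoc (bigG n T A)ᵀ, Matrix.mul_assoc (bigG n T A)ᵀ,
    ← mulVec_mulVec δ (bigG n T A)ᵀ, Matrix.dotProduct_transpose_mulVec, dotProduct_comm,
    ← mulVec_mulVec δ _ (bigG n T A)]

lemma isHermitian_Cmat (A : Matrix (Fin n) (Fin n) ℝ) (B : Matrix (Fin n) (Fin m) ℝ)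
    (hQ : Q.PosSemidef) (hR : R.PosDef) : (Cmat n m T A B Q R).IsHermitian := by
  rw [Cmat, Matrix.mul_assoc (bigG n T A)ᵀ]
  exact isHermitian_conjTranspose_mul_mul _
    (isHermitian_mul_one_add_inv (posSemidef_bigQ hQ) (posDef_bigR hR))

variable {Φx : Matrix (SIdx n T) (SIdx n T) ℝ} {Φu : Matrix (UIdx m T) (SIdx n T) ℝ}

lemma isHermitian_lmi (A : Matrix (Fin n) (Fin n) ℝ) (B : Matrix (Fin n) (Fin m) ℝ)
    (hQ : Q.PosSemidef) (hR : R.PosDef) (hP : P.IsHermitian) (γ : ℝ)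
    (Φx : Matrix (SIdx n T) (SIdx n T) ℝ) (Φu : Matrix (UIdx m T) (SIdx n T) ℝ) :
    (γ ^ 2 • (1 : Matrix (Fin T × Fin n) (Fin T × Fin n) ℝ) +
      (Cmat n m T A B Q R).submatrix (fun c : Fin T × Fin n => (c.1.succ, c.2))
        (fun c : Fin T × Fin n => (c.1.succ, c.2)) -
      (stackW n m T Φx Φu)ᵀ * bigS n m T Q P R * stackW n m T Φx Φu).IsHermitian := by
  have hS : (bigS n m T Q P R).IsHermitian :=
    (isHermitian_bigQbar hQ.isHermitian hP).fromBlocks (by simp) (posDef_bigR hR).isHermitian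
  have hone := (isHermitian_one (n := Fin T × Fin n) (α := ℝ)).smul (IsSelfAdjoint.all (γ ^ 2))
  exact (hone.add ((isHermitian_Cmat A B hQ hR).submatrix _)).sub
    (isHermitian_conjTranspose_mul_mul _ hS)

lemma lmiOK_iff_hasRegretBound (hQ : Q.PosSemidef) (hR : R.PosDef) (hP : P.IsHermitian) :
    lmiOK n m T A B Q R P γ Φx Φu ↔ (𝒮).HasRegretBound (blockLin Φx) (blockLin Φu) := by
  rw [lmiOK, posSemidef_iff_dotProduct_mulVec,
    and_iff_right (isHermitian_lmi A B hQ hR hP γ Φx Φu)]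
  refine (Equiv.curry _ _ _).forall_congr fun {w} => ?_
  have hδ : (Fin.cons 0 (Function.curry w) : Fin (T + 1) → Fin n → ℝ) =
      Function.curry (assemble n T 0 w) := by
    rw [assemble_eq_uncurry, Function.curry_uncurry]
  have hsupply : ∑ t, (𝒮).supply (Function.curry w t) = γ ^ 2 * (w ⬝ᵥ w) := by
    simp only [supply_matrixLQ, ← Finset.mul_sum, dotProduct_eq_sum_curry w w]
  change _ ↔ (𝒮).runningCost (blockLin Φx (Fin.cons 0 (Function.curry w)))
        (blockLin Φu (Fin.cons 0 (Function.curry w))) +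
      (𝒮).terminalCost (blockLin Φx (Fin.cons 0 (Function.curry w)) (Fin.last T)) ≤
    ∑ t, (𝒮).supply (Function.curry w t) + (𝒮).clairvoyantCost (Fin.cons 0 (Function.curry w))
  rw [hδ, blockLin_curry, blockLin_curry, runningCost_add_terminalCost_matrixLQ, hsupply,
    clairvoyantCost_matrixLQ hQ hR, ← stackW_mulVec, star_trivial, sub_mulVec, add_mulVec,
    smul_mulVec, one_mulVec, dotProduct_sub, dotProduct_add, dotProduct_smul, smul_eq_mul,
    dotProduct_submatrix_mulVec, sub_nonneg, Matrix.mul_assoc, ← mulVec_mulVec,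
    Matrix.dotProduct_transpose_mulVec, ← mulVec_mulVec, dotProduct_comm]

lemma achievablePair_iff_isTrajectory :
    achievablePair n m T A B Φx Φu ↔
      ∀ δ, (𝒮).IsTrajectory δ (blockLin Φx δ) (blockLin Φu δ) := by
  rw [achievablePair, ← mulVec_injective.eq_iff, funext_iff]
  refine (Equiv.curry _ _ _).forall_congr fun {δ} => ?_
  change _ ↔ (𝒮).IsTrajectory (Function.curry δ) (blockLin Φx (Function.curry δ))
    (blockLin Φu (Function.curry δ))
  rw [blockLin_curry, blockLin_curry, isTrajectory_matrixLQ_iff, sub_mulVec, one_mulVec,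
    mulVec_mulVec, mulVec_mulVec]

lemma causalPair_iff :
    causalPair n m T Φx Φu ↔
      (∀ t (δ : Fin (T + 1) → Fin n → ℝ), (∀ s ≤ t, δ s = 0) → blockLin Φx δ t = 0) ∧
        ∀ t (δ : Fin (T + 1) → Fin n → ℝ), (∀ s ≤ Fin.castSucc t, δ s = 0) →
          blockLin Φu δ t = 0 := by
  refine and_congr ?_ ?_ <;> rw [Prod.forall] <;> refine forall_congr' fun t => ?_
  · rw [← forall_block_eq_zero_iff Φx t (· ≤ t)]
    simp only [Prod.forall, not_le, Fin.lt_def]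
  · rw [← forall_block_eq_zero_iff Φu t (· ≤ t.castSucc)]
    simp only [Prod.forall, not_le, Fin.lt_def, Fin.val_castSucc]

lemma isResponse_matrixLQ_iff :
    (𝒮).IsResponse (blockLin Φx) (blockLin Φu) ↔
      causalPair n m T Φx Φu ∧ achievablePair n m T A B Φx Φu := by
  rw [causalPair_iff, achievablePair_iff_isTrajectory]
  exact ⟨fun h => ⟨⟨fun _ _ hδ => h.state_eq_zero hδ, fun t δ => h.input_eq_zero δ t⟩,
    h.isTrajectory⟩,
    fun h => ⟨h.2, fun δ t => h.1.2 t δ⟩⟩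

lemma safePair_iff_isSafe (x₀ : Fin n → ℝ) :
    safePair n m T W Zc Zf x₀ Φx Φu ↔ (𝒮).IsSafe x₀ (blockLin Φx) (blockLin Φu) := by
  refine (Equiv.curry _ _ _).forall_congr fun {w} => ?_
  rw [assemble_eq_uncurry]
  rfl

theorem memPi_iff_isAdmissible (hQ : Q.PosSemidef) (hR : R.PosDef) (hP : P.IsHermitian)
    (x₀ : Fin n → ℝ) :
    memPi n m T A B Q R P W Zc Zf γ x₀ Φx Φu ↔
      (𝒮).IsAdmissible x₀ (blockLin Φx) (blockLin Φu) := by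
  rw [memPi, safePair_iff_isSafe, lmiOK_iff_hasRegretBound hQ hR hP, ← and_assoc,
    ← isResponse_matrixLQ_iff]
  exact ⟨fun h => ⟨h.1, h.2.1, h.2.2⟩, fun h => ⟨h.toIsResponse, h.safe, h.regret⟩⟩

theorem Xset_eq_feasibleSet (hQ : Q.PosSemidef) (hR : R.PosDef) (hP : P.IsHermitian) :
    Xset n m T A B Q R P W Zc Zf γ = (𝒮).feasibleSet T := by
  ext x₀
  constructor
  · rintro ⟨Φx, Φu, h⟩
    exact ⟨_, _, (memPi_iff_isAdmissible hQ hR hP x₀).1 h⟩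
  · rintro ⟨X, U, h⟩
    obtain ⟨Φx, rfl⟩ := blockLin.surjective X
    obtain ⟨Φu, rfl⟩ := blockLin.surjective U
    exact ⟨Φx, Φu, (memPi_iff_isAdmissible hQ hR hP x₀).2 h⟩

lemma blockLin_cons_zero {k l : ℕ} (D : Matrix (Fin k × Fin l) (SIdx n T) ℝ) (x : Fin n → ℝ)
    (t : Fin k) : blockLin D (Fin.cons x 0) t = fun i => ∑ j, D (t, i) (0, j) * x j := by
  funext i
  simp [blockLin_apply, mulVec, dotProduct, Fintype.sum_prod_type, Fin.sum_univ_succ]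

lemma isTerminalController_matrixLQ {γf : ℝ} {Pbar : Matrix (Fin n) (Fin n) ℝ}
    {Kf : Matrix (Fin m) (Fin n) ℝ} (hR : R.PosDef) (hP : P.PosSemidef)
    (hγP : (γf ^ 2 • (1 : Matrix (Fin n) (Fin n) ℝ) - P).PosDef)
    (hPbar : Pbar = P + P * (γf ^ 2 • (1 : Matrix (Fin n) (Fin n) ℝ) - P)⁻¹ * P)
    (hRic : P = Q + Aᵀ * Pbar * A - Aᵀ * Pbar * B * (R + Bᵀ * Pbar * B)⁻¹ * Bᵀ * Pbar * A)
    (hKf : Kf = -((R + Bᵀ * Pbar * B)⁻¹ * Bᵀ * Pbar * A)) (hγ : γf ^ 2 ≤ γ ^ 2)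
    (hZfK : ∀ x ∈ Zf, (x, Kf *ᵥ x) ∈ Zc)
    (hZfInv : ∀ x ∈ Zf, ∀ w ∈ W, (A + B * Kf) *ᵥ x + w ∈ Zf) :
    (𝒮).IsTerminalController Kf.mulVecLin where
  dissipation x w := by
    rw [supply_matrixLQ]
    simp only [matrixLQ, toQuadraticForm'_apply, mulVecLin_apply]
    refine (riccati_dissipation hR hP hγP hPbar hRic hKf x w).trans ?_
    gcongr
    exact by simpa using dotProduct_star_self_nonneg w
  mem_constraints := hZfK
  mem_terminalSet x hx w hw := by
    have hnext := hZfInv x hx w hw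
    rwa [add_mulVec, ← mulVec_mulVec] at hnext

end Bridge

theorem stmt18_general {n m T : ℕ} {A : Matrix (Fin n) (Fin n) ℝ} {B : Matrix (Fin n) (Fin m) ℝ}
    {Q : Matrix (Fin n) (Fin n) ℝ} {R : Matrix (Fin m) (Fin m) ℝ}
    (hQ : Q.PosSemidef) (hR : R.PosDef) {γf : ℝ}
    {P : Matrix (Fin n) (Fin n) ℝ} (hP : P.PosSemidef)
    (hγP : (γf ^ 2 • (1 : Matrix (Fin n) (Fin n) ℝ) - P).PosDef)
    {Pbar : Matrix (Fin n) (Fin n) ℝ}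
    (hPbar : Pbar = P + P * (γf ^ 2 • (1 : Matrix (Fin n) (Fin n) ℝ) - P)⁻¹ * P)
    (hRic : P = Q + Aᵀ * Pbar * A - Aᵀ * Pbar * B * (R + Bᵀ * Pbar * B)⁻¹ * Bᵀ * Pbar * A)
    {Kf : Matrix (Fin m) (Fin n) ℝ} (hKf : Kf = -((R + Bᵀ * Pbar * B)⁻¹ * Bᵀ * Pbar * A))
    {W : Set (Fin n → ℝ)} {Zc : Set ((Fin n → ℝ) × (Fin m → ℝ))} {Zf : Set (Fin n → ℝ)}
    (hZf0 : 0 ∈ Zf) (hZfK : ∀ x ∈ Zf, (x, Kf *ᵥ x) ∈ Zc)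
    (hZfInv : ∀ x ∈ Zf, ∀ w ∈ W, (A + B * Kf) *ᵥ x + w ∈ Zf)
    (hT : 1 ≤ T) {γ : ℝ} (hγ : γf ^ 2 ≤ γ ^ 2) {x : Fin n → ℝ}
    {Φx : Matrix (SIdx n T) (SIdx n T) ℝ} {Φu : Matrix (UIdx m T) (SIdx n T) ℝ}
    (hmem : memPi n m T A B Q R P W Zc Zf γ x Φx Φu) {w : Fin n → ℝ} (hw : w ∈ W) :
    A *ᵥ x + B *ᵥ (fun i => ∑ j, Φu (⟨0, hT⟩, i) (0, j) * x j) + w ∈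
      Xset n m T A B Q R P W Zc Zf γ := by
  obtain ⟨T, rfl⟩ := Nat.exists_eq_add_of_le' hT
  have hadm := (memPi_iff_isAdmissible hQ hR hP.isHermitian x).1 hmem
  have hK := isTerminalController_matrixLQ hR hP hγP hPbar hRic hKf hγ hZfK hZfInv
  rw [Xset_eq_feasibleSet hQ hR hP.isHermitian, ← blockLin_cons_zero]
  refine hadm.successor_mem_feasibleSet (fun v => ?_) (fun v => ?_) hK hZf0 hw
  · exact (toQuadraticForm'_apply Q v).symm ▸ hQ.dotProduct_mulVec_nonneg v
  · exact (toQuadraticForm'_apply R v).symm ▸ hR.posSemidef.dotProduct_mulVec_nonneg v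

/-- Theorem 1 (robust positive invariance of the feasible set): for every `γ ≥ γ_f`,
every `x ∈ X_T^γ`, every admissible pair in `Π_T^γ(x)` with first control action
`u₀ = Φu^{[0,0]} x`, and every `w ∈ 𝒲`, the successor state `Ax + Bu₀ + w` lies in
`X_T^γ`. -/
theorem stmt18 (n m : ℕ) (hn : 0 < n) (hm : 0 < m)
    (A : Matrix (Fin n) (Fin n) ℝ) (B : Matrix (Fin n) (Fin m) ℝ)
    (Q : Matrix (Fin n) (Fin n) ℝ) (R : Matrix (Fin m) (Fin m) ℝ)
    (hQ : Q.PosSemidef) (hR : R.PosDef)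
    (γf : ℝ) (hγf : 0 < γf)
    (P : Matrix (Fin n) (Fin n) ℝ) (hP : P.PosDef)
    (hγP : (γf ^ 2 • (1 : Matrix (Fin n) (Fin n) ℝ) - P).PosDef)
    (Pbar : Matrix (Fin n) (Fin n) ℝ)
    (hPbar : Pbar = P + P * (γf ^ 2 • (1 : Matrix (Fin n) (Fin n) ℝ) - P)⁻¹ * P)
    (hRic : P = Q + Aᵀ * Pbar * A -
      Aᵀ * Pbar * B * (R + Bᵀ * Pbar * B)⁻¹ * Bᵀ * Pbar * A)
    (Kf : Matrix (Fin m) (Fin n) ℝ)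
    (hKf : Kf = -((R + Bᵀ * Pbar * B)⁻¹ * Bᵀ * Pbar * A))
    (W : Set (Fin n → ℝ)) (hWconv : Convex ℝ W) (hWcomp : IsCompact W)
    (hW0 : (0 : Fin n → ℝ) ∈ interior W)
    (Zc : Set ((Fin n → ℝ) × (Fin m → ℝ))) (hZcl : IsClosed Zc) (hZconv : Convex ℝ Zc)
    (hZ0 : ((0 : Fin n → ℝ), (0 : Fin m → ℝ)) ∈ interior Zc)
    (Zf : Set (Fin n → ℝ)) (hZfcl : IsClosed Zf) (hZfconv : Convex ℝ Zf)
    (hZf0 : (0 : Fin n → ℝ) ∈ interior Zf)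
    (hZfK : ∀ x ∈ Zf, (x, Kf *ᵥ x) ∈ Zc)
    (hZfInv : ∀ x ∈ Zf, ∀ w ∈ W, (A + B * Kf) *ᵥ x + w ∈ Zf)
    (T : ℕ) (hT : 1 ≤ T)
    (γ : ℝ) (hγ : γf ≤ γ)
    (x : Fin n → ℝ)
    (Φx : Matrix (SIdx n T) (SIdx n T) ℝ) (Φu : Matrix (UIdx m T) (SIdx n T) ℝ)
    (hmem : memPi n m T A B Q R P W Zc Zf γ x Φx Φu)
    (u0 : Fin m → ℝ)
    (hu0 : u0 = fun i => ∑ j : Fin n,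
      Φu ((⟨0, by omega⟩ : Fin T), i) ((0 : Fin (T + 1)), j) * x j)
    (w : Fin n → ℝ) (hw : w ∈ W) :
    A *ᵥ x + B *ᵥ u0 + w ∈ Xset n m T A B Q R P W Zc Zf γ :=
  hu0 ▸ stmt18_general hQ hR hP.posSemidef hγP hPbar hRic hKf (interior_subset hZf0) hZfK hZfInv
    hT (pow_le_pow_left₀ hγf.le hγ 2) hmem hw

end
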